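/- The intersection of the Markov spectrum M with the open interval (4√6/3, (18879+800√30)/7089) consists of exactly one point, namely √689/8, which is therefore an isolated point of M. Moreover, both endpoints 4√6/3 and (18879+800√30)/7089 belong to M. -/

import Mathlib

open Filter Set MeasureTheory
open scoped ENNReal

/-- Finite continued fraction `[a 0; a 1, ..., a n]`. -/
noncomputable def cfConv : (ℕ → ℝ) → ℕ → ℝ
  | a, 0 => a 0
  | a, n + 1 => a 0 + 1 / cfConv (fun i => a (i + 1)) n

/-- Value of the infinite continued fraction `[a 0; a 1, a 2, ...]`,
as the limit of its convergents. -/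
noncomputable def cfVal (a : ℕ → ℝ) : ℝ := limUnder atTop (cfConv a)

/-- `λ_k(α) = [α_k; α_{k+1}, ...] + [0; α_{k-1}, α_{k-2}, ...]`. -/
noncomputable def lambdaVal (α : ℤ → ℕ) (k : ℤ) : ℝ :=
  cfVal (fun n => (α (k + n) : ℝ)) +
  cfVal (fun n => if n = 0 then 0 else (α (k - n) : ℝ))

/-- The Markov value `m(α) = sup_{k ∈ ℤ} λ_k(α)`. -/
noncomputable def markovValue (α : ℤ → ℕ) : ℝ := ⨆ k : ℤ, lambdaVal α k

/-- The Markov spectrum. -/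
def markovSpectrum : Set ℝ :=
  { x | ∃ α : ℤ → ℕ, (∀ n, 0 < α n) ∧ BddAbove (range (lambdaVal α)) ∧
      markovValue α = x }

/-- The dimension function `d(t) = dim_H (M ∩ (-∞, t))`. -/
noncomputable def dimFun (t : ℝ) : ℝ≥0∞ := dimH (markovSpectrum ∩ Iio t)

/-!
If `m(α) < (18879 + 800√30)/7089`, then `α` has digits in `{1, 2}`, and a finite search shows that
a position `k` with `λ_k(α) > 4√6/3` carries one of three windows of radius `10`, up to reflection.
* Around `(2111)^∞`, the digits on at least one side of `k` would have to represent a number larger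
  than the purely periodic `[0; 1, 1, 1, 2, …]`. Moving one period towards that side keeps the
  window and multiplies the excess by at least four, which is impossible for a bounded quantity.
* Around `…222 1221 2112 1221 222…`, the same expansion argument bounds both outer tails from below,
  and one of the two values at the `2`s of the block `2112` is then at least
  `(18879 + 800√30)/7089`.
* Around `(21221211)^∞`, large values recur at distances `5` and `3` alternately. This forces the
  whole sequence to be periodic, with Markov value `√689/8`.
-/

/-! ### Convergence -/

lemma one_le_cfConv {a : ℕ → ℝ} (ha : ∀ i, 1 ≤ a i) (n : ℕ) : 1 ≤ cfConv a n := by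
  induction n generalizing a with
  | zero => exact ha 0
  | succ n ih =>
    have htail := ih (a := fun i => a (i + 1)) fun i => ha _
    have hpos : 0 ≤ 1 / cfConv (fun i => a (i + 1)) n := by positivity
    simp only [cfConv]
    linarith [ha 0]

lemma cfConv_mem_Icc {a : ℕ → ℝ} (ha : ∀ i, 1 ≤ a i) (n : ℕ) :
    cfConv a n ∈ Icc (a 0) (a 0 + 1) := by
  cases n with
  | zero => simp [cfConv]
  | succ n =>
    have htail := one_le_cfConv (a := fun i => a (i + 1)) (fun i => ha _) n
    have hinv : 1 / cfConv (fun i => a (i + 1)) n ∈ Icc 0 1 :=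
      ⟨by positivity, div_le_one_of_le₀ htail (by positivity)⟩
    simp only [cfConv, mem_Icc] at hinv ⊢
    constructor <;> linarith

lemma abs_one_div_add_sub_one_div_add_le {a x y : ℝ} (ha : 1 ≤ a) (hx : 0 ≤ x) (hy : 0 ≤ y) :
    |1 / (a + x) - 1 / (a + y)| ≤ |x - y| := by
  have key : 1 / (a + x) - 1 / (a + y) = (y - x) / ((a + x) * (a + y)) := by
    field_simp
    ring
  rw [key, abs_div, abs_sub_comm, abs_of_pos (a := (a + x) * (a + y)) (by positivity)]
  exact div_le_self (abs_nonneg _) (one_le_mul_of_one_le_of_one_le (by linarith) (by linarith))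

lemma four_mul_abs_cfStep_sub_le {a b x y : ℝ} (ha : 1 ≤ a) (hb : 1 ≤ b) (hx : 0 ≤ x)
    (hy : 0 ≤ y) :
    4 * |1 / (a + 1 / (b + x)) - 1 / (a + 1 / (b + y))| ≤ |x - y| := by
  have key : 1 / (a + 1 / (b + x)) - 1 / (a + 1 / (b + y)) =
      (x - y) / ((a * (b + x) + 1) * (a * (b + y) + 1)) := by
    field_simp
    ring
  have hden : 4 ≤ (a * (b + x) + 1) * (a * (b + y) + 1) := by
    have hax : 1 ≤ a * (b + x) := one_le_mul_of_one_le_of_one_le ha (by linarith)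
    have hay : 1 ≤ a * (b + y) := one_le_mul_of_one_le_of_one_le ha (by linarith)
    nlinarith
  rw [key, abs_div, abs_of_pos (a := (a * (b + x) + 1) * (a * (b + y) + 1)) (by positivity),
    mul_div_assoc', div_le_iff₀ (by positivity), mul_comm]
  gcongr

lemma abs_cfConv_sub_le {a : ℕ → ℝ} (ha : ∀ i, 1 ≤ a i) (j n m : ℕ) :
    |cfConv a (n + 2 * j) - cfConv a (m + 2 * j)| ≤ (1 / 4) ^ j := by
  induction j generalizing a with
  | zero =>
    have hn := cfConv_mem_Icc ha n
    have hm := cfConv_mem_Icc ha m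
    simp only [mem_Icc] at hn hm
    simp only [mul_zero, add_zero, pow_zero, abs_le]
    constructor <;> linarith
  | succ j ih =>
    have hs : ∀ i, 1 ≤ (fun i => a (i + 1 + 1)) i := fun i => ha _
    have hstep := four_mul_abs_cfStep_sub_le (ha (0 + 1)) le_rfl
      (sub_nonneg.2 (one_le_cfConv hs (n + 2 * j))) (sub_nonneg.2 (one_le_cfConv hs (m + 2 * j)))
    simp only [add_sub_cancel, sub_sub_sub_cancel_right] at hstep
    simp only [show ∀ i, i + 2 * (j + 1) = i + 2 * j + 1 + 1 by intro i; ring, cfConv,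
      add_sub_add_left_eq_sub]
    linarith [ih hs, pow_succ (1 / 4 : ℝ) j]

lemma tendsto_cfConv {a : ℕ → ℝ} (ha : ∀ i, 1 ≤ a i) :
    Tendsto (cfConv a) atTop (nhds (cfVal a)) := by
  refine tendsto_nhds_limUnder (cauchySeq_tendsto_of_complete
    (Metric.cauchySeq_iff'.2 fun ε hε => ?_))
  obtain ⟨j, hj⟩ := exists_pow_lt_of_lt_one hε (by norm_num : (1 / 4 : ℝ) < 1)
  refine ⟨2 * j, fun n hn => ?_⟩
  obtain ⟨i, rfl⟩ := Nat.exists_eq_add_of_le' hn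
  simpa only [zero_add, Real.dist_eq] using (abs_cfConv_sub_le ha j i 0).trans_lt hj

lemma one_le_cfVal {a : ℕ → ℝ} (ha : ∀ i, 1 ≤ a i) : 1 ≤ cfVal a :=
  ge_of_tendsto' (tendsto_cfConv ha) (one_le_cfConv ha)

-- The integer part is unconstrained because `lambdaVal` uses the value `0` there.
lemma cfVal_eq_add {a : ℕ → ℝ} (ha : ∀ i, 1 ≤ a (i + 1)) :
    cfVal a = a 0 + 1 / cfVal fun i => a (i + 1) := by
  have hne : cfVal (fun i => a (i + 1)) ≠ 0 := (zero_lt_one.trans_le (one_le_cfVal ha)).ne'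
  have hlim := ((tendsto_const_nhds (x := (1 : ℝ))).div (tendsto_cfConv ha) hne).const_add (a 0)
  exact ((tendsto_add_atTop_iff_nat 1).1 hlim).limUnder_eq

/-! ### Fractional continued fractions and the action of words -/

/-- The continued fraction `[0; s₀, s₁, …]`. -/
noncomputable def cfFrac (s : Stream' ℕ) : ℝ := 1 / cfVal fun n => (s.get n : ℝ)

/-- The map `t ↦ [0; w₀, w₁, …, wₙ + t]` that prepending the word `w` induces on continued
fractions. It is defined over any field, so that it can be computed over `ℚ`. -/
def cfWord {K : Type*} [Field K] (w : List ℕ) (t : K) : K :=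
  w.foldr (fun (a : ℕ) x => ((a : K) + x)⁻¹) t

lemma cfWord_cons {K : Type*} [Field K] (a : ℕ) (w : List ℕ) (t : K) :
    cfWord (a :: w) t = 1 / (a + cfWord w t) :=
  inv_eq_one_div _

/-- All entries of the family `a` lie in `{1, …, N}`. -/
def DigitsLE {ι : Type*} (N : ℕ) (a : ι → ℕ) : Prop := ∀ i, 0 < a i ∧ a i ≤ N

/-- The stream `s` starts with the word `w`. -/
def HasPrefix (s : Stream' ℕ) (w : List ℕ) : Prop := s.take w.length = w

section HasPrefix

variable {s : Stream' ℕ} {u v w : List ℕ}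

lemma hasPrefix_nil (s : Stream' ℕ) : HasPrefix s [] := rfl

lemma hasPrefix_cons {a : ℕ} : HasPrefix s (a :: w) ↔ s.head = a ∧ HasPrefix s.tail w := by
  rw [HasPrefix, List.length_cons, Stream'.take_succ, List.cons.injEq, HasPrefix]

lemma HasPrefix.concat (h : HasPrefix s w) : HasPrefix s (w ++ [s.get w.length]) := by
  rw [HasPrefix, List.length_append, List.length_singleton, Stream'.take_succ', h]

lemma take_prefix_take {m n : ℕ} (h : m ≤ n) : s.take m <+: s.take n := by
  rw [← min_eq_right h, ← Stream'.take_take]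
  exact List.take_prefix _ _

lemma HasPrefix.mono (hv : HasPrefix s v) (huv : u <+: v) : HasPrefix s u := by
  have h : s.take u.length <+: v := by
    conv_rhs => rw [← hv]
    exact take_prefix_take huv.length_le
  exact (List.prefix_of_prefix_length_le h huv (by simp)).eq_of_length (by simp)

lemma HasPrefix.prefix_or_prefix (hu : HasPrefix s u) (hv : HasPrefix s v) :
    u <+: v ∨ v <+: u := by
  rw [← hu, ← hv]
  exact (le_total u.length v.length).imp take_prefix_take take_prefix_take

lemma HasPrefix.get_eq (h : HasPrefix s w) {n : ℕ} (hn : n < w.length) : s.get n = w[n] := by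
  have := Stream'.getElem?_take (s := s) hn
  rw [h, List.getElem?_eq_getElem hn] at this
  exact (Option.some_injective _ this).symm

lemma HasPrefix.one_le_of_mem (h : HasPrefix s w) (hs : ∀ n, 0 < s.get n) :
    ∀ a ∈ w, 1 ≤ a := by
  intro a ha
  obtain ⟨n, hn, rfl⟩ := List.getElem_of_mem ha
  rw [← h.get_eq hn]
  exact hs n

end HasPrefix

section cfFrac

variable {s : Stream' ℕ} {w : List ℕ} {N : ℕ}

lemma cfFrac_pos (hs : ∀ n, 0 < s.get n) : 0 < cfFrac s :=
  one_div_pos.2 (zero_lt_one.trans_le (one_le_cfVal fun n => by exact_mod_cast hs n))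

lemma cfFrac_le_one (hs : ∀ n, 0 < s.get n) : cfFrac s ≤ 1 := by
  have h := one_le_cfVal (a := fun n => (s.get n : ℝ)) fun n => by exact_mod_cast hs n
  exact div_le_one_of_le₀ h (by positivity)

lemma cfFrac_eq (hs : ∀ n, 0 < s.get n) : cfFrac s = 1 / (s.head + cfFrac s.tail) := by
  rw [cfFrac, cfVal_eq_add fun n => by exact_mod_cast hs _]
  rfl

lemma cfFrac_eq_cfWord_take (hs : ∀ n, 0 < s.get n) (n : ℕ) :
    cfFrac s = cfWord (s.take n) (cfFrac (s.drop n)) := by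
  induction n generalizing s with
  | zero => rfl
  | succ n ih =>
    rw [cfFrac_eq hs, ih (s := s.tail) fun i => hs (i + 1), Stream'.take_succ, cfWord_cons]
    rfl

lemma HasPrefix.cfFrac_eq (hs : ∀ n, 0 < s.get n) (h : HasPrefix s w) :
    cfFrac s = cfWord w (cfFrac (s.drop w.length)) := by
  rw [cfFrac_eq_cfWord_take hs w.length, h]

lemma inv_le_cfFrac (hs : DigitsLE N s) {u : ℝ} (hu : cfFrac s.tail ≤ u) :
    1 / (N + u) ≤ cfFrac s := by
  rw [cfFrac_eq fun n => (hs n).1]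
  have hhead : (s.head : ℝ) ≤ N := by exact_mod_cast (hs 0).2
  have hpos : (0 : ℝ) < s.head := by exact_mod_cast (hs 0).1
  have htail := cfFrac_pos (s := s.tail) fun n => (hs (n + 1)).1
  gcongr

lemma cfFrac_le_inv (hs : ∀ n, 0 < s.get n) {l : ℝ} (hl : 0 ≤ l) (h : l ≤ cfFrac s.tail) :
    cfFrac s ≤ 1 / (1 + l) := by
  rw [cfFrac_eq hs]
  have hhead : (1 : ℝ) ≤ s.head := by exact_mod_cast hs 0
  gcongr

-- `15 / 41 = [0; 2, 1, 2, 1, 3]` and `11 / 15 = [0; 1, 2, 1, 3]` truncate the extremal expansions.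
lemma cfFrac_mem_Icc_of_digitsLE_two (hs : DigitsLE 2 s) :
    cfFrac s ∈ Icc (15 / 41 : ℝ) (11 / 15) := by
  have htail : ∀ {t : Stream' ℕ}, DigitsLE 2 t → DigitsLE 2 t.tail := fun ht n => ht (n + 1)
  have lower {u l : ℝ} (hul : l ≤ 1 / (2 + u)) (hu : ∀ t : Stream' ℕ, DigitsLE 2 t → cfFrac t ≤ u)
      (t : Stream' ℕ) (ht : DigitsLE 2 t) : l ≤ cfFrac t :=
    hul.trans (by exact_mod_cast inv_le_cfFrac ht (hu _ (htail ht)))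
  have upper {u l : ℝ} (hlu : 1 / (1 + l) ≤ u) (hl0 : 0 ≤ l)
      (hl : ∀ t : Stream' ℕ, DigitsLE 2 t → l ≤ cfFrac t)
      (t : Stream' ℕ) (ht : DigitsLE 2 t) : cfFrac t ≤ u :=
    (cfFrac_le_inv (fun n => (ht n).1) hl0 (hl _ (htail ht))).trans hlu
  have h₁ := lower (l := 1 / 3) (by norm_num) fun t ht => cfFrac_le_one fun n => (ht n).1
  have h₂ := upper (u := 3 / 4) (by norm_num) (by norm_num) h₁
  have h₃ := lower (l := 4 / 11) (by norm_num) h₂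
  have h₄ := upper (u := 11 / 15) (by norm_num) (by norm_num) h₃
  have h₅ := lower (l := 15 / 41) (by norm_num) h₄
  exact ⟨h₅ s hs, h₄ s hs⟩

end cfFrac

section cfWord

variable {w : List ℕ} {x y : ℝ}

lemma cfWord_nonneg (hx : 0 ≤ x) : 0 ≤ cfWord w x := by
  induction w with
  | nil => exact hx
  | cons a w ih =>
    rw [cfWord_cons]
    positivity

lemma neg_one_pow_mul_cfWord_sub_nonneg (hw : ∀ a ∈ w, 1 ≤ a) (hx : 0 ≤ x) (hxy : x ≤ y) :
    0 ≤ (-1) ^ w.length * (cfWord w y - cfWord w x) := by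
  induction w with
  | nil => simpa [cfWord] using hxy
  | cons a w ih =>
    rw [List.forall_mem_cons] at hw
    have ha : (0 : ℝ) < a := by exact_mod_cast hw.1
    have hwx := cfWord_nonneg (w := w) hx
    have hwy := cfWord_nonneg (w := w) (hx.trans hxy)
    have key : (-1) ^ (a :: w).length * (cfWord (a :: w) y - cfWord (a :: w) x) =
        (-1) ^ w.length * (cfWord w y - cfWord w x) /
          ((a + cfWord w y) * (a + cfWord w x)) := by
      rw [List.length_cons, pow_succ, cfWord_cons, cfWord_cons]
      field_simp
      ring
    rw [key]
    exact div_nonneg (ih hw.2) (by positivity)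

lemma cfWord_le_cfWord_of_even (hw : ∀ a ∈ w, 1 ≤ a) (heven : Even w.length) (hx : 0 ≤ x)
    (hxy : x ≤ y) : cfWord w x ≤ cfWord w y := by
  simpa [heven.neg_one_pow] using neg_one_pow_mul_cfWord_sub_nonneg hw hx hxy

lemma cfWord_le_cfWord_of_odd (hw : ∀ a ∈ w, 1 ≤ a) (hodd : Odd w.length) (hx : 0 ≤ x)
    (hxy : x ≤ y) : cfWord w y ≤ cfWord w x := by
  simpa [hodd.neg_one_pow] using neg_one_pow_mul_cfWord_sub_nonneg hw hx hxy

lemma abs_cfWord_sub_le (hw : ∀ a ∈ w, 1 ≤ a) (hx : 0 ≤ x) (hy : 0 ≤ y) :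
    |cfWord w x - cfWord w y| ≤ |x - y| := by
  induction w with
  | nil => rfl
  | cons a w ih =>
    rw [List.forall_mem_cons] at hw
    rw [cfWord_cons, cfWord_cons]
    exact (abs_one_div_add_sub_one_div_add_le (by exact_mod_cast hw.1) (cfWord_nonneg hx)
      (cfWord_nonneg hy)).trans (ih hw.2)

lemma four_mul_abs_cfWord_sub_le (hw : ∀ a ∈ w, 1 ≤ a) (hlen : 2 ≤ w.length) (hx : 0 ≤ x)
    (hy : 0 ≤ y) : 4 * |cfWord w x - cfWord w y| ≤ |x - y| := by
  obtain ⟨a, b, w, rfl⟩ : ∃ a b w', w = a :: b :: w' := by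
    match w, hlen with
    | a :: b :: w', _ => exact ⟨a, b, w', rfl⟩
  simp only [List.forall_mem_cons] at hw
  simp only [cfWord_cons]
  exact (four_mul_abs_cfStep_sub_le (by exact_mod_cast hw.1) (by exact_mod_cast hw.2.1)
    (cfWord_nonneg hx) (cfWord_nonneg hy)).trans (abs_cfWord_sub_le hw.2.2 hx hy)

lemma eq_of_cfWord_eq_self (hw : ∀ a ∈ w, 1 ≤ a) (hlen : 2 ≤ w.length) (hx : 0 ≤ x) (hy : 0 ≤ y)
    (hwx : cfWord w x = x) (hwy : cfWord w y = y) : x = y := by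
  have h := four_mul_abs_cfWord_sub_le hw hlen hx hy
  rw [hwx, hwy] at h
  exact sub_eq_zero.1 (abs_nonpos_iff.1 (by linarith))

lemma HasPrefix.cfFrac_eq_of_drop_eq {s : Stream' ℕ} (h : HasPrefix s w) (hs : ∀ n, 0 < s.get n)
    (hper : s.drop w.length = s) (hlen : 2 ≤ w.length) (hx : 0 ≤ x) (hwx : cfWord w x = x) :
    cfFrac s = x :=
  eq_of_cfWord_eq_self (h.one_le_of_mem hs) hlen (cfFrac_pos hs).le hx
    (by conv_rhs => rw [h.cfFrac_eq hs, hper]) hwx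

lemma cast_cfWord (w : List ℕ) (q : ℚ) : ((cfWord w q : ℚ) : ℝ) = cfWord w (q : ℝ) := by
  induction w with
  | nil => rfl
  | cons a w ih =>
    rw [cfWord_cons, cfWord_cons, ← ih]
    push_cast
    rfl

end cfWord

/-! ### Finite windows of a bi-infinite sequence -/

/-- The digits `α (k + 1), α (k + 2), …`. -/
def rightDigits (α : ℤ → ℕ) (k : ℤ) : Stream' ℕ := fun n => α (k + 1 + n)

/-- The digits `α (k - 1), α (k - 2), …`. -/
def leftDigits (α : ℤ → ℕ) (k : ℤ) : Stream' ℕ := fun n => α (k - 1 - n)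

/-- The mirror image of `α` under `n ↦ c - n`. -/
def reflect (α : ℤ → ℕ) (c : ℤ) : ℤ → ℕ := fun n => α (c - n)

/-- A finite piece of a bi-infinite sequence around a distinguished position. Both sides are read
outwards from the center, so that reflection just swaps them. -/
structure Window where
  /-- The digits to the left of the center, the nearest first. -/
  left : List ℕ
  /-- The digit at the distinguished position. -/
  center : ℕ
  /-- The digits to the right of the center, the nearest first. -/
  right : List ℕ
deriving DecidableEq

/-- The window `w`, placed with its center at `k`, agrees with `α`. -/
def OccursAt (α : ℤ → ℕ) (k : ℤ) (w : Window) : Prop :=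
  α k = w.center ∧ HasPrefix (leftDigits α k) w.left ∧ HasPrefix (rightDigits α k) w.right

/-- The least value over `{1, 2}`-sequences starting with `w`, up to the truncation made in
`cfFrac_mem_Icc_of_digitsLE_two`: prepending `w` reverses the order exactly when its length is
odd. -/
def cfLower (w : List ℕ) : ℚ := cfWord w (if Even w.length then 15 / 41 else 11 / 15)

/-- The upper counterpart of `cfLower`. -/
def cfUpper (w : List ℕ) : ℚ := cfWord w (if Even w.length then 11 / 15 else 15 / 41)

namespace Window

/-- The mirror image of a window. -/
def reverse (w : Window) : Window := ⟨w.right, w.center, w.left⟩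

/-- The same digits with the center moved `n` places to the right; for `n` beyond the right end,
the center stays at the last digit. -/
def shift : ℕ → Window → Window
  | n + 1, ⟨l, c, a :: r⟩ => shift n ⟨c :: l, a, r⟩
  | _, w => w

/-- A lower bound for `λ_k` at an occurrence of the window in a `{1, 2}`-sequence. -/
def lower (w : Window) : ℚ := w.center + cfLower w.left + cfLower w.right

/-- An upper bound for `λ_k` at an occurrence of the window in a `{1, 2}`-sequence. -/
def upper (w : Window) : ℚ := w.center + cfUpper w.left + cfUpper w.right

/-- The windows obtained by adding a digit `1` or `2` at each end. -/
def extensions (w : Window) : List Window := do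
  let a ← [1, 2]
  let b ← [1, 2]
  return ⟨w.left ++ [a], w.center, w.right ++ [b]⟩

/-- The windows of radius `n` with center `c` that survive the digit by digit search for the
occurrences with `lo < λ_k` in `{1, 2}`-sequences all of whose values are below `hi`. Values are
compared with `hi` only at the digits `2`: those at the digits `1` are too small to matter. -/
def search (lo hi : ℚ) (c : ℕ) : ℕ → List Window
  | 0 => [⟨[], c, []⟩]
  | n + 1 => ((search lo hi c n).flatMap extensions).filter fun w =>
      lo < w.upper ∧
        (∀ i ≤ w.right.length, (w.shift i).center = 2 → (w.shift i).lower < hi) ∧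
        ∀ i ≤ w.left.length, (w.reverse.shift i).center = 2 → (w.reverse.shift i).lower < hi

/-- The window `v` is a part of the window `w` with the same center. -/
def IsPart (v w : Window) : Prop :=
  v.center = w.center ∧ v.left <+: w.left ∧ v.right <+: w.right

instance (v w : Window) : Decidable (v.IsPart w) := by
  unfold IsPart
  infer_instance

/-- Two windows that can occur at the same position. -/
def Compatible (v w : Window) : Prop :=
  v.center = w.center ∧ (v.left <+: w.left ∨ w.left <+: v.left) ∧
    (v.right <+: w.right ∨ w.right <+: v.right)

instance (v w : Window) : Decidable (v.Compatible w) := by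
  unfold Compatible
  infer_instance

end Window

section Digits

variable {α : ℤ → ℕ} {k : ℤ} {s : Stream' ℕ} {w : List ℕ} {N : ℕ}

lemma HasPrefix.cfFrac_mem_Icc (h : HasPrefix s w) (hs : DigitsLE 2 s) :
    cfFrac s ∈ Icc (cfLower w : ℝ) (cfUpper w) := by
  have hpos : ∀ n, 0 < s.get n := fun n => (hs n).1
  have hw := h.one_le_of_mem hpos
  obtain ⟨hlower, hupper⟩ :=
    cfFrac_mem_Icc_of_digitsLE_two (s := s.drop w.length) fun n => hs (n + w.length)
  rw [h.cfFrac_eq hpos, cfLower, cfUpper, cast_cfWord, cast_cfWord]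
  rcases Nat.even_or_odd w.length with hparity | hparity
  · simp only [hparity, if_true]
    push_cast
    exact ⟨cfWord_le_cfWord_of_even hw hparity (by norm_num) hlower,
      cfWord_le_cfWord_of_even hw hparity (by linarith) hupper⟩
  · simp only [Nat.not_even_iff_odd.2 hparity, if_false]
    push_cast
    exact ⟨cfWord_le_cfWord_of_odd hw hparity (by linarith) hupper,
      cfWord_le_cfWord_of_odd hw hparity (by norm_num) hlower⟩

lemma DigitsLE.rightDigits (hα : DigitsLE N α) : DigitsLE N (rightDigits α k) := fun _ => hα _

lemma DigitsLE.leftDigits (hα : DigitsLE N α) : DigitsLE N (leftDigits α k) := fun _ => hα _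

lemma lambdaVal_eq (hα : ∀ n, 0 < α n) :
    lambdaVal α k = α k + cfFrac (leftDigits α k) + cfFrac (rightDigits α k) := by
  have hright := cfVal_eq_add (a := fun n => (α (k + n) : ℝ)) fun i => by exact_mod_cast hα _
  have hleft := cfVal_eq_add (a := fun n => if n = 0 then 0 else (α (k - n) : ℝ)) fun i => by
    simpa [Nat.one_le_iff_ne_zero, ← Nat.pos_iff_ne_zero] using hα _
  have hR : cfFrac (rightDigits α k) = 1 / cfVal fun n => (α (k + ↑(n + 1)) : ℝ) := by
    simp only [cfFrac, Stream'.get, rightDigits, Nat.cast_add, Nat.cast_one, add_assoc,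
      add_comm (1 : ℤ)]
  have hL : cfFrac (leftDigits α k) = 1 / cfVal fun n => (α (k - ↑(n + 1)) : ℝ) := by
    simp only [cfFrac, Stream'.get, leftDigits, Nat.cast_add, Nat.cast_one, sub_sub,
      add_comm (1 : ℤ)]
  rw [lambdaVal, hright, hleft, hL, hR]
  simp [add_right_comm]

lemma drop_rightDigits (n : ℕ) : (rightDigits α k).drop n = rightDigits α (k + n) := by
  funext i
  simp only [Stream'.drop, Stream'.get, rightDigits]
  congr 1
  push_cast
  ring

lemma drop_leftDigits (n : ℕ) : (leftDigits α k).drop n = leftDigits α (k - n) := by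
  funext i
  simp only [Stream'.drop, Stream'.get, leftDigits]
  congr 1
  push_cast
  ring

lemma rightDigits_reflect (c : ℤ) : rightDigits (reflect α c) k = leftDigits α (c - k) := by
  funext n
  simp only [rightDigits, leftDigits, reflect]
  congr 1
  ring

lemma leftDigits_reflect (c : ℤ) : leftDigits (reflect α c) k = rightDigits α (c - k) := by
  funext n
  simp only [rightDigits, leftDigits, reflect]
  congr 1
  ring

lemma lambdaVal_reflect (hα : ∀ n, 0 < α n) (c : ℤ) :
    lambdaVal (reflect α c) k = lambdaVal α (c - k) := by
  rw [lambdaVal_eq hα, lambdaVal_eq (α := reflect α c) fun n => hα (c - n), rightDigits_reflect,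
    leftDigits_reflect, reflect, add_right_comm]

lemma HasPrefix.cfFrac_rightDigits (h : HasPrefix (rightDigits α k) w) (hα : ∀ n, 0 < α n) :
    cfFrac (rightDigits α k) = cfWord w (cfFrac (rightDigits α (k + w.length))) := by
  rw [← drop_rightDigits]
  exact h.cfFrac_eq fun _ => hα _

lemma HasPrefix.cfFrac_leftDigits (h : HasPrefix (leftDigits α k) w) (hα : ∀ n, 0 < α n) :
    cfFrac (leftDigits α k) = cfWord w (cfFrac (leftDigits α (k - w.length))) := by
  rw [← drop_leftDigits]
  exact h.cfFrac_eq fun _ => hα _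

end Digits

section OccursAt

variable {α : ℤ → ℕ} {k : ℤ} {v w : Window}

lemma OccursAt.mono (hw : OccursAt α k w) (hvw : v.IsPart w) : OccursAt α k v :=
  ⟨hw.1.trans hvw.1.symm, hw.2.1.mono hvw.2.1, hw.2.2.mono hvw.2.2⟩

lemma OccursAt.compatible (hv : OccursAt α k v) (hw : OccursAt α k w) : v.Compatible w :=
  ⟨hv.1.symm.trans hw.1, hv.2.1.prefix_or_prefix hw.2.1, hv.2.2.prefix_or_prefix hw.2.2⟩

lemma occursAt_reflect (c : ℤ) :
    OccursAt (reflect α c) k w ↔ OccursAt α (c - k) w.reverse := by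
  rw [OccursAt, OccursAt, leftDigits_reflect, rightDigits_reflect, Window.reverse]
  simp only [reflect, and_comm]

lemma OccursAt.shift {n : ℕ} (hw : OccursAt α k w) (hn : n ≤ w.right.length) :
    OccursAt α (k + n) (w.shift n) := by
  induction n generalizing k w with
  | zero => simpa [Window.shift] using hw
  | succ n ih =>
    obtain ⟨l, c, _ | ⟨a, r⟩⟩ := w
    · simp at hn
    obtain ⟨hcenter, hleft, hright⟩ := hw
    obtain ⟨hhead, htail⟩ := hasPrefix_cons.1 hright
    have hhead' : α (k + 1) = a := by simpa [rightDigits, Stream'.head, Stream'.get] using hhead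
    have htail' : HasPrefix (rightDigits α (k + 1)) r := by
      rwa [Stream'.tail_eq_drop, drop_rightDigits, Nat.cast_one] at htail
    have hleft' : HasPrefix (leftDigits α (k + 1)) (c :: l) := by
      refine hasPrefix_cons.2 ⟨?_, ?_⟩
      · simpa [leftDigits, Stream'.head, Stream'.get] using hcenter
      · rwa [Stream'.tail_eq_drop, drop_leftDigits, Nat.cast_one, add_sub_cancel_right]
    have hnext := ih (w := ⟨c :: l, a, r⟩) ⟨hhead', hleft', htail'⟩ (Nat.le_of_succ_le_succ hn)
    rwa [add_assoc, add_comm 1, ← Nat.cast_succ] at hnext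

lemma OccursAt.lambdaVal_mem_Icc (hw : OccursAt α k w) (hα : DigitsLE 2 α) :
    lambdaVal α k ∈ Icc (w.lower : ℝ) w.upper := by
  obtain ⟨hcenter, hleft, hright⟩ := hw
  obtain ⟨hleft_lower, hleft_upper⟩ := hleft.cfFrac_mem_Icc hα.leftDigits
  obtain ⟨hright_lower, hright_upper⟩ := hright.cfFrac_mem_Icc hα.rightDigits
  rw [lambdaVal_eq fun n => (hα n).1, hcenter, Window.lower, Window.upper]
  push_cast
  constructor <;> linarith

lemma OccursAt.exists_mem_extensions (hw : OccursAt α k w) (hα : DigitsLE 2 α) :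
    ∃ v ∈ w.extensions, OccursAt α k v := by
  have digit_mem (i : ℤ) : α i ∈ [1, 2] := by
    have := hα i
    simp only [List.mem_cons, List.not_mem_nil, or_false]
    omega
  have hmem : ∀ a ∈ [1, 2], ∀ b ∈ [1, 2],
      (⟨w.left ++ [a], w.center, w.right ++ [b]⟩ : Window) ∈ w.extensions := by
    simp [Window.extensions]
  exact ⟨_, hmem _ (digit_mem _) _ (digit_mem _), hw.1, hw.2.1.concat, hw.2.2.concat⟩

lemma exists_mem_search {lo hi : ℚ} (hα : DigitsLE 2 α) (hhi : ∀ k, lambdaVal α k < hi)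
    (hlo : lo < lambdaVal α k) (n : ℕ) :
    ∃ w ∈ Window.search lo hi (α k) n, OccursAt α k w := by
  have lower_lt {j : ℤ} {w : Window} (hw : OccursAt α j w) : w.lower < hi := by
    exact_mod_cast (hw.lambdaVal_mem_Icc hα).1.trans_lt (hhi j)
  induction n with
  | zero =>
    exact ⟨⟨[], α k, []⟩, List.mem_singleton_self _, rfl, hasPrefix_nil _, hasPrefix_nil _⟩
  | succ n ih =>
    obtain ⟨v, hv, hvk⟩ := ih
    obtain ⟨w, hw, hwk⟩ := hvk.exists_mem_extensions hα
    refine ⟨w, List.mem_filter.2 ⟨List.mem_flatMap.2 ⟨v, hv, hw⟩, decide_eq_true ⟨?_, ?_, ?_⟩⟩, hwk⟩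
    · exact_mod_cast hlo.trans_le (hwk.lambdaVal_mem_Icc hα).2
    · exact fun i hi _ => lower_lt (hwk.shift hi)
    · intro i hi _
      have hmirror : OccursAt (reflect α (k + k)) (k + i) (w.reverse.shift i) :=
        ((occursAt_reflect _).2 (by rwa [add_sub_cancel_right])).shift hi
      have := hmirror.lambdaVal_mem_Icc fun n => hα _
      rw [lambdaVal_reflect fun n => (hα n).1] at this
      exact_mod_cast this.1.trans_lt (hhi _)

end OccursAt

/-! ### Large values of a sequence with Markov value in the gap -/

/-- The left endpoint `4√6/3` of the gap. -/
noncomputable def gapLeft : ℝ := 4 * √6 / 3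

/-- The right endpoint `(18879 + 800√30)/7089` of the gap. -/
noncomputable def gapRight : ℝ := (18879 + 800 * √30) / 7089

/-- A rational lower bound for `gapLeft`, sharp enough for the window search. -/
def gapLower : ℚ := 326598 / 100000

/-- A rational upper bound for `gapRight`, sharp enough for the window search. -/
def gapUpper : ℚ := 105 / 32

lemma gapLower_lt_gapLeft : gapLower < gapLeft := by
  have h : (2.449486 : ℝ) < √6 := Real.lt_sqrt_of_sq_lt (by norm_num)
  rw [gapLower, gapLeft]
  push_cast
  linarith

lemma gapRight_lt_gapUpper : gapRight < gapUpper := by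
  have h : √30 < 5.477226 := (Real.sqrt_lt' (by norm_num)).2 (by norm_num)
  rw [gapUpper, gapRight]
  push_cast
  linarith

/-- A window of the period `2111`, whose Markov value is `gapLeft`. -/
def leftWindow : Window :=
  ⟨[1, 1, 1, 2, 1, 1, 1, 2, 1, 1], 2, [1, 1, 1, 2, 1, 1, 1, 2, 1, 1]⟩

/-- A window of the period `21221211`, whose Markov value is `√689/8`. -/
def isolatedWindow : Window :=
  ⟨[1, 1, 2, 1, 2, 2, 1, 2, 1, 1], 2, [1, 2, 2, 1, 2, 1, 1, 2, 1, 2]⟩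

/-- A window of the sequence `…222 1221 2112 1221 222…`, whose Markov value is `gapRight`. -/
def rightWindow : Window :=
  ⟨[1, 1, 2, 1, 2, 2, 1, 2, 2, 2], 2, [1, 2, 2, 1, 2, 2, 2, 1, 2, 2]⟩

/-- The windows that survive the search for values above `gapLeft`. -/
def candidates : List Window :=
  [leftWindow, isolatedWindow, rightWindow, isolatedWindow.reverse, rightWindow.reverse]

lemma search_one_eq_nil : Window.search gapLower gapUpper 1 10 = [] := by
  decide +kernel

set_option maxRecDepth 10000 in
lemma search_two_eq_candidates : Window.search gapLower gapUpper 2 10 = candidates := by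
  decide +kernel

/-- A `{1, 2}`-sequence all of whose values lie below `gapRight`. -/
structure BelowGapRight (α : ℤ → ℕ) : Prop where
  digitsLE : DigitsLE 2 α
  lambdaVal_lt : ∀ k, lambdaVal α k < gapRight

namespace BelowGapRight

variable {α : ℤ → ℕ} {k : ℤ} {v w : Window}

protected lemma reflect (h : BelowGapRight α) (c : ℤ) : BelowGapRight (reflect α c) where
  digitsLE _ := h.digitsLE _
  lambdaVal_lt _ := by
    rw [lambdaVal_reflect fun n => (h.digitsLE n).1]
    exact h.lambdaVal_lt _

lemma exists_mem_candidates (h : BelowGapRight α) (hk : gapLower < lambdaVal α k) :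
    ∃ w ∈ candidates, OccursAt α k w := by
  obtain ⟨w, hw, hwk⟩ := exists_mem_search h.digitsLE
    (fun k => (h.lambdaVal_lt k).trans gapRight_lt_gapUpper) hk 10
  obtain ⟨hpos, hle⟩ := h.digitsLE k
  obtain hone | htwo : α k = 1 ∨ α k = 2 := by omega
  · rw [hone, search_one_eq_nil] at hw
    exact absurd hw List.not_mem_nil
  · rw [htwo, search_two_eq_candidates] at hw
    exact ⟨w, hw, hwk⟩

lemma occursAt_of_compatible (h : BelowGapRight α) (hv : OccursAt α k v)
    (hk : gapLower < lambdaVal α k) (hvw : ∀ u ∈ candidates, v.Compatible u → u = w) :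
    OccursAt α k w := by
  obtain ⟨u, hu, huk⟩ := h.exists_mem_candidates hk
  rwa [← hvw u hu (hv.compatible huk)]

lemma gapLower_lt_lambdaVal (h : BelowGapRight α) (hv : OccursAt α k v)
    (hlower : gapLower < v.lower) : gapLower < lambdaVal α k :=
  (Rat.cast_lt.2 hlower).trans_le (hv.lambdaVal_mem_Icc h.digitsLE).1

lemma not_occursAt (h : BelowGapRight α) (hv : gapUpper ≤ v.lower) : ¬ OccursAt α k v := fun hvk =>
  ((h.lambdaVal_lt k).trans gapRight_lt_gapUpper).not_ge
    ((Rat.cast_le.2 hv).trans (hvk.lambdaVal_mem_Icc h.digitsLE).1)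

end BelowGapRight

lemma nonpos_of_expanding {ι : Type*} {P : ι → Prop} {f : ι → ℝ} {c C : ℝ} (hc : 1 < c)
    (hbdd : ∀ i, P i → f i ≤ C) (hstep : ∀ i, P i → 0 < f i → ∃ j, P j ∧ c * f i ≤ f j)
    {i : ι} (hi : P i) : f i ≤ 0 := by
  by_contra! hpos
  have : 0 < c := by linarith
  have hiter (n : ℕ) : ∃ j, P j ∧ c ^ n * f i ≤ f j := by
    induction n with
    | zero => exact ⟨i, hi, by simp⟩
    | succ n ih =>
      obtain ⟨j, hj, hle⟩ := ih
      obtain ⟨l, hl, hjl⟩ := hstep j hj ((by positivity : 0 < c ^ n * f i).trans_le hle)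
      refine ⟨l, hl, le_trans ?_ hjl⟩
      rw [pow_succ', mul_assoc]
      gcongr
  obtain ⟨n, hn⟩ := pow_unbounded_of_one_lt (C / f i) hc
  obtain ⟨j, hj, hle⟩ := hiter n
  exact ((div_lt_iff₀ hpos).1 hn).not_ge (hle.trans (hbdd j hj))

lemma four_mul_cfWord_sub_le {w : List ℕ} {x y : ℝ} (hw : ∀ a ∈ w, 1 ≤ a)
    (heven : Even w.length) (hlen : 2 ≤ w.length) (hx : 0 ≤ x) (hy : 0 ≤ y)
    (hwx : cfWord w x = x) (hlt : x < cfWord w y) : 4 * (cfWord w y - x) ≤ y - x := by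
  have hxy : x < y := by
    by_contra! hyx
    exact hlt.not_ge ((cfWord_le_cfWord_of_even hw heven hy hyx).trans_eq hwx)
  have h := four_mul_abs_cfWord_sub_le hw hlen hy hx
  rwa [hwx, abs_of_pos (sub_pos.2 hlt), abs_of_pos (sub_pos.2 hxy)] at h

lemma four_mul_sub_cfWord_le {w : List ℕ} {x y : ℝ} (hw : ∀ a ∈ w, 1 ≤ a)
    (heven : Even w.length) (hlen : 2 ≤ w.length) (hx : 0 ≤ x) (hy : 0 ≤ y)
    (hwx : cfWord w x = x) (hlt : cfWord w y < x) : 4 * (x - cfWord w y) ≤ x - y := by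
  have hyx : y < x := by
    by_contra! hxy
    exact hlt.not_ge (hwx.symm.trans_le (cfWord_le_cfWord_of_even hw heven hx hxy))
  have h := four_mul_abs_cfWord_sub_le hw hlen hx hy
  rwa [hwx, abs_of_pos (sub_pos.2 hlt), abs_of_pos (sub_pos.2 hyx)] at h

/-! ### The left endpoint -/

/-- The continued fraction `[0; 1, 1, 1, 2, 1, 1, 1, 2, …]`. -/
noncomputable def leftTail : ℝ := 2 * √6 / 3 - 1

lemma leftTail_nonneg : 0 ≤ leftTail := by
  have h : (2 : ℝ) < √6 := Real.lt_sqrt_of_sq_lt (by norm_num)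
  rw [leftTail]
  linarith

lemma cfWord_leftTail : cfWord [1, 1, 1, 2] leftTail = leftTail := by
  have hx := leftTail_nonneg
  have hroot : 3 * leftTail ^ 2 + 6 * leftTail = 5 := by
    rw [leftTail]
    linear_combination 4 / 3 * Real.sq_sqrt (show (0 : ℝ) ≤ 6 by norm_num)
  have hmoebius : cfWord [1, 1, 1, 2] leftTail = (5 + 2 * leftTail) / (8 + 3 * leftTail) := by
    simp only [cfWord, List.foldr_cons, List.foldr_nil]
    push_cast
    field_simp
    ring
  rw [hmoebius, div_eq_iff (by positivity)]
  linear_combination -hroot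

lemma gapLeft_eq : gapLeft = 2 + 2 * leftTail := by
  rw [gapLeft, leftTail]
  ring

namespace BelowGapRight

variable {α : ℤ → ℕ} {k : ℤ}

-- Moving one period to the right expands the distance of the right fraction to `leftTail` and
-- contracts that of the left one, so that the value stays above `gapLeft`.
lemma leftWindow_step (h : BelowGapRight α) (hk : gapLeft < lambdaVal α k)
    (hw : OccursAt α k leftWindow) (hright : leftTail < cfFrac (rightDigits α k)) :
    (gapLeft < lambdaVal α (k + 4) ∧ OccursAt α (k + 4) leftWindow) ∧
      4 * (cfFrac (rightDigits α k) - leftTail) ≤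
        cfFrac (rightDigits α (k + 4)) - leftTail := by
  have hpos (n : ℤ) : 0 < α n := (h.digitsLE n).1
  have hshift : OccursAt α (k + 4) (leftWindow.shift 4) := hw.shift (n := 4) (by decide)
  have hR : cfFrac (rightDigits α k) = cfWord [1, 1, 1, 2] (cfFrac (rightDigits α (k + 4))) :=
    (hw.2.2.mono (by decide)).cfFrac_rightDigits hpos
  have hL : cfFrac (leftDigits α (k + 4)) = cfWord [1, 1, 1, 2] (cfFrac (leftDigits α k)) := by
    have := HasPrefix.cfFrac_leftDigits (w := [1, 1, 1, 2]) (hshift.2.1.mono (by decide)) hpos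
    simpa using this
  have hword : ∀ a ∈ [1, 1, 1, 2], 1 ≤ a := by decide
  have hR₀ : 0 ≤ cfFrac (rightDigits α (k + 4)) := (cfFrac_pos fun _ => hpos _).le
  have hL₀ : 0 ≤ cfFrac (leftDigits α k) := (cfFrac_pos fun _ => hpos _).le
  have hR_expand : 4 * (cfFrac (rightDigits α k) - leftTail) ≤
      cfFrac (rightDigits α (k + 4)) - leftTail := by
    rw [hR] at hright ⊢
    exact four_mul_cfWord_sub_le hword (by decide) (by decide) leftTail_nonneg hR₀
      cfWord_leftTail hright
  have hL_contract := four_mul_abs_cfWord_sub_le hword (by decide) hL₀ leftTail_nonneg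
  rw [← hL, cfWord_leftTail] at hL_contract
  have hk' : gapLeft < lambdaVal α (k + 4) := by
    rw [lambdaVal_eq hpos, hw.1, gapLeft_eq, leftWindow] at hk
    rw [lambdaVal_eq hpos, hshift.1, gapLeft_eq]
    simp only [leftWindow, Window.shift, Nat.cast_ofNat] at hk ⊢
    rcases le_total leftTail (cfFrac (leftDigits α k)) with hle | hle
    · have := cfWord_le_cfWord_of_even hword (by decide) leftTail_nonneg hle
      rw [← hL, cfWord_leftTail] at this
      linarith
    · rw [abs_of_nonpos (sub_nonpos.2 hle)] at hL_contract
      linarith [neg_abs_le (cfFrac (leftDigits α (k + 4)) - leftTail)]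
  exact ⟨⟨hk', h.occursAt_of_compatible hshift (gapLower_lt_gapLeft.trans hk') (by decide)⟩,
    hR_expand⟩

lemma cfFrac_rightDigits_le_leftTail (h : BelowGapRight α) (hk : gapLeft < lambdaVal α k)
    (hw : OccursAt α k leftWindow) : cfFrac (rightDigits α k) ≤ leftTail := by
  refine sub_nonpos.1 (nonpos_of_expanding (C := 1)
    (P := fun j => gapLeft < lambdaVal α j ∧ OccursAt α j leftWindow)
    (f := fun j => cfFrac (rightDigits α j) - leftTail) (by norm_num : (1 : ℝ) < 4)
    (fun j _ => ?_) (fun j hj hpos => ⟨j + 4, h.leftWindow_step hj.1 hj.2 (sub_pos.1 hpos)⟩)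
    ⟨hk, hw⟩)
  have := cfFrac_le_one (s := rightDigits α j) fun n => (h.digitsLE _).1
  linarith [leftTail_nonneg]

lemma not_occursAt_leftWindow (h : BelowGapRight α) (hk : gapLeft < lambdaVal α k) :
    ¬ OccursAt α k leftWindow := fun hw => by
  have hpos (n : ℤ) : 0 < α n := (h.digitsLE n).1
  have hright := h.cfFrac_rightDigits_le_leftTail hk hw
  have hleft := (h.reflect (k + k)).cfFrac_rightDigits_le_leftTail (k := k)
    (by rwa [lambdaVal_reflect hpos, add_sub_cancel_right])
    ((occursAt_reflect _).2 (by rwa [add_sub_cancel_right]))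
  rw [rightDigits_reflect, add_sub_cancel_right] at hleft
  rw [lambdaVal_eq hpos, hw.1, gapLeft_eq, leftWindow] at hk
  push_cast at hk
  linarith

end BelowGapRight

/-! ### The right endpoint -/

/-- The continued fraction `[0; 2, 2, 2, 1, 2, 2, 2, 1, …]`. -/
noncomputable def rightTail : ℝ := (√30 - 3) / 6

lemma rightTail_nonneg : 0 ≤ rightTail := by
  have h : (3 : ℝ) < √30 := Real.lt_sqrt_of_sq_lt (by norm_num)
  rw [rightTail]
  linarith

lemma rightTail_lt : rightTail < 207 / 500 := by
  have h : √30 < 5.48 := (Real.sqrt_lt' (by norm_num)).2 (by norm_num)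
  rw [rightTail]
  linarith

lemma cfWord_rightTail : cfWord [2, 2, 2, 1] rightTail = rightTail := by
  have hx := rightTail_nonneg
  have hroot : 12 * rightTail ^ 2 + 12 * rightTail = 7 := by
    rw [rightTail]
    linear_combination 1 / 3 * Real.sq_sqrt (show (0 : ℝ) ≤ 30 by norm_num)
  have hmoebius : cfWord [2, 2, 2, 1] rightTail = (7 + 5 * rightTail) / (17 + 12 * rightTail) := by
    simp only [cfWord, List.foldr_cons, List.foldr_nil]
    push_cast
    field_simp
    ring
  rw [hmoebius, div_eq_iff (by positivity)]
  linear_combination -hroot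

/-- The continued fraction `[0; 1, 2, 2, 1, 2, 2, 2, 1, 2, 2, 2, 1, …]`. -/
noncomputable def rightBranch : ℝ := cfWord [1, 2, 2, 1] rightTail

lemma rightBranch_nonneg : 0 ≤ rightBranch := cfWord_nonneg rightTail_nonneg

lemma rightBranch_eq : rightBranch = (1 + 2 * √30) / 17 := by
  have hx := rightTail_nonneg
  have hmoebius : rightBranch = (7 + 5 * rightTail) / (10 + 7 * rightTail) := by
    simp only [rightBranch, cfWord, List.foldr_cons, List.foldr_nil]
    push_cast
    field_simp
    ring
  rw [hmoebius, div_eq_iff (by positivity), rightTail]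
  linear_combination -7 / 51 * Real.sq_sqrt (show (0 : ℝ) ≤ 30 by norm_num)

lemma gapRight_eq : gapRight = 2 + cfWord [1, 1, 2] rightBranch + rightBranch := by
  have hx := rightBranch_nonneg
  have hmoebius :
      cfWord [1, 1, 2] rightBranch = (3 + rightBranch) / (5 + 2 * rightBranch) := by
    simp only [cfWord, List.foldr_cons, List.foldr_nil]
    push_cast
    field_simp
    ring
  have hvalue : cfWord [1, 1, 2] rightBranch = (252 - 2 * √30) / 417 := by
    rw [hmoebius, div_eq_iff (by positivity), rightBranch_eq]
    linear_combination 8 / 7089 * Real.sq_sqrt (show (0 : ℝ) ≤ 30 by norm_num)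
  rw [hvalue, rightBranch_eq, gapRight]
  ring

lemma HasPrefix.concat_one_or_two {s : Stream' ℕ} {w : List ℕ} (h : HasPrefix s w)
    (hs : DigitsLE 2 s) : HasPrefix s (w ++ [1]) ∨ HasPrefix s (w ++ [2]) := by
  obtain ⟨hpos, hle⟩ := hs w.length
  obtain hone | htwo : s.get w.length = 1 ∨ s.get w.length = 2 := by
    simp only [Stream'.get]
    omega
  · exact .inl (hone ▸ h.concat)
  · exact .inr (htwo ▸ h.concat)

namespace BelowGapRight

variable {α : ℤ → ℕ} {k : ℤ}

lemma hasPrefix_of_lt_rightTail (h : BelowGapRight α) (hw : OccursAt α k ⟨[2, 2, 2], 1, []⟩)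
    (hlt : cfFrac (rightDigits α k) < rightTail) : HasPrefix (rightDigits α k) [2, 2, 2, 1] := by
  have hdigits : DigitsLE 2 (rightDigits α k) := h.digitsLE.rightDigits
  have not_prefix {u : List ℕ} (hu : 207 / 500 ≤ cfLower u) : ¬ HasPrefix (rightDigits α k) u := by
    intro hprefix
    have hlower : (207 / 500 : ℝ) ≤ cfLower u := by
      have := (Rat.cast_le (K := ℝ)).2 hu
      push_cast at this
      exact this
    linarith [(hprefix.cfFrac_mem_Icc hdigits).1, rightTail_lt]
  have h₁ : HasPrefix (rightDigits α k) [2] :=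
    ((hasPrefix_nil _).concat_one_or_two hdigits).resolve_left (not_prefix (by decide +kernel))
  have h₂ : HasPrefix (rightDigits α k) [2, 2] := by
    refine (h₁.concat_one_or_two hdigits).resolve_left fun hprefix => ?_
    have hw' : OccursAt α k ⟨[2, 2, 2], 1, [2, 1]⟩ := ⟨hw.1, hw.2.1, hprefix⟩
    exact h.not_occursAt (by decide +kernel) (hw'.shift (n := 1) (by decide))
  have h₃ : HasPrefix (rightDigits α k) [2, 2, 2] :=
    (h₂.concat_one_or_two hdigits).resolve_left (not_prefix (by decide +kernel))
  exact (h₃.concat_one_or_two hdigits).resolve_right (not_prefix (by decide +kernel))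

lemma rightTail_le (h : BelowGapRight α) (hw : OccursAt α k ⟨[2, 2, 2], 1, []⟩) :
    rightTail ≤ cfFrac (rightDigits α k) := by
  have hpos (n : ℤ) : 0 < α n := (h.digitsLE n).1
  refine sub_nonpos.1 (nonpos_of_expanding (C := rightTail)
    (P := fun j => OccursAt α j ⟨[2, 2, 2], 1, []⟩)
    (f := fun j => rightTail - cfFrac (rightDigits α j)) (by norm_num : (1 : ℝ) < 4)
    (fun j _ => sub_le_self _ (cfFrac_pos fun _ => hpos _).le) (fun j hj hlt => ?_) hw)
  have hprefix := h.hasPrefix_of_lt_rightTail hj (sub_pos.1 hlt)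
  have hnext : OccursAt α j ⟨[2, 2, 2], 1, [2, 2, 2, 1]⟩ := ⟨hj.1, hj.2.1, hprefix⟩
  refine ⟨j + 4, (hnext.shift (n := 4) (by decide)).mono (by decide), ?_⟩
  have hR : cfFrac (rightDigits α j) = cfWord [2, 2, 2, 1] (cfFrac (rightDigits α (j + 4))) :=
    hprefix.cfFrac_rightDigits hpos
  rw [hR] at hlt ⊢
  exact four_mul_sub_cfWord_le (by decide) (by decide) (by decide) rightTail_nonneg
    (cfFrac_pos fun _ => hpos _).le cfWord_rightTail (sub_pos.1 hlt)

lemma rightBranch_le (h : BelowGapRight α) (hw : OccursAt α k rightWindow) :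
    rightBranch ≤ cfFrac (rightDigits α k) := by
  have hpos (n : ℤ) : 0 < α n := (h.digitsLE n).1
  have hprefix : HasPrefix (rightDigits α k) [1, 2, 2, 1, 2, 2, 2, 1] := hw.2.2.mono (by decide)
  have htail : rightTail ≤ cfFrac (rightDigits α (k + 8)) :=
    h.rightTail_le ((hw.shift (n := 8) (by decide)).mono (by decide))
  calc rightBranch = cfWord [1, 2, 2, 1] (cfWord [2, 2, 2, 1] rightTail) := by
        rw [cfWord_rightTail, rightBranch]
    _ ≤ cfWord [1, 2, 2, 1, 2, 2, 2, 1] (cfFrac (rightDigits α (k + 8))) :=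
        cfWord_le_cfWord_of_even (w := [1, 2, 2, 1, 2, 2, 2, 1]) (by decide) (by decide)
          rightTail_nonneg htail
    _ = cfFrac (rightDigits α k) := (hprefix.cfFrac_rightDigits hpos).symm

lemma occursAt_rightWindow_add_three (h : BelowGapRight α)
    (hw : OccursAt α k rightWindow.reverse) : OccursAt α (k + 3) rightWindow := by
  have hshift := hw.shift (n := 3) (by decide)
  exact h.occursAt_of_compatible hshift (h.gapLower_lt_lambdaVal hshift (by decide +kernel))
    (by decide)

lemma not_occursAt_rightWindow_reverse (h : BelowGapRight α) :
    ¬ OccursAt α k rightWindow.reverse := fun hw => by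
  have hpos (n : ℤ) : 0 < α n := (h.digitsLE n).1
  have hw' := h.occursAt_rightWindow_add_three hw
  have hX := h.rightBranch_le hw'
  have hY := (h.reflect (k + k)).rightBranch_le (k := k)
    ((occursAt_reflect _).2 (by rwa [add_sub_cancel_right]))
  rw [rightDigits_reflect, add_sub_cancel_right] at hY
  have hR : cfFrac (rightDigits α k) = cfWord [1, 1, 2] (cfFrac (rightDigits α (k + 3))) :=
    (hw.2.2.mono (by decide)).cfFrac_rightDigits hpos
  have hL : cfFrac (leftDigits α (k + 3)) = cfWord [1, 1, 2] (cfFrac (leftDigits α k)) := by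
    have := HasPrefix.cfFrac_leftDigits (w := [1, 1, 2]) (hw'.2.1.mono (by decide)) hpos
    simpa using this
  have hlt := h.lambdaVal_lt k
  have hlt' := h.lambdaVal_lt (k + 3)
  rw [lambdaVal_eq hpos, hw.1, hR, gapRight_eq] at hlt
  rw [lambdaVal_eq hpos, hw'.1, hL, gapRight_eq] at hlt'
  have hword : ∀ a ∈ [1, 1, 2], 1 ≤ a := by decide
  have hX_lip := abs_cfWord_sub_le hword rightBranch_nonneg (rightBranch_nonneg.trans hX)
  have hY_lip := abs_cfWord_sub_le hword rightBranch_nonneg (rightBranch_nonneg.trans hY)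
  rw [abs_sub_comm _ (cfFrac _), abs_of_nonneg (sub_nonneg.2 hX)] at hX_lip
  rw [abs_sub_comm _ (cfFrac _), abs_of_nonneg (sub_nonneg.2 hY)] at hY_lip
  simp only [rightWindow, Window.reverse, Nat.cast_ofNat] at hlt hlt'
  rcases le_total (cfFrac (leftDigits α k)) (cfFrac (rightDigits α (k + 3))) with hYX | hXY
  · linarith [le_abs_self
      (cfWord [1, 1, 2] rightBranch - cfWord [1, 1, 2] (cfFrac (leftDigits α k)))]
  · linarith [le_abs_self
      (cfWord [1, 1, 2] rightBranch - cfWord [1, 1, 2] (cfFrac (rightDigits α (k + 3))))]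

lemma not_occursAt_rightWindow (h : BelowGapRight α) : ¬ OccursAt α k rightWindow := fun hw =>
  (h.reflect (k + k)).not_occursAt_rightWindow_reverse (k := k)
    ((occursAt_reflect _).2 (by rwa [add_sub_cancel_right]))

end BelowGapRight

/-! ### The isolated point -/

/-- The sequence of period `21221211`, with a period starting at `0`. -/
def periodicSeq (n : ℤ) : ℕ := if n % 8 = 0 ∨ n % 8 = 2 ∨ n % 8 = 3 ∨ n % 8 = 5 then 2 else 1

namespace BelowGapRight

variable {α : ℤ → ℕ} {k : ℤ}

lemma occursAt_isolatedWindow_reverse_add_five (h : BelowGapRight α)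
    (hw : OccursAt α k isolatedWindow) : OccursAt α (k + 5) isolatedWindow.reverse := by
  have hshift := hw.shift (n := 5) (by decide)
  exact h.occursAt_of_compatible hshift (h.gapLower_lt_lambdaVal hshift (by decide +kernel))
    (by decide)

lemma occursAt_isolatedWindow_add_three (h : BelowGapRight α)
    (hw : OccursAt α k isolatedWindow.reverse) : OccursAt α (k + 3) isolatedWindow := by
  have hshift := hw.shift (n := 3) (by decide)
  exact h.occursAt_of_compatible hshift (h.gapLower_lt_lambdaVal hshift (by decide +kernel))
    (by decide)

lemma occursAt_isolatedWindow_add_eight (h : BelowGapRight α)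
    (hw : OccursAt α k isolatedWindow) : OccursAt α (k + 8) isolatedWindow := by
  have := h.occursAt_isolatedWindow_add_three (h.occursAt_isolatedWindow_reverse_add_five hw)
  rwa [add_assoc] at this

lemma occursAt_isolatedWindow_sub_eight (h : BelowGapRight α)
    (hw : OccursAt α k isolatedWindow) : OccursAt α (k - 8) isolatedWindow := by
  have hmirror : OccursAt (reflect α (k + k)) k isolatedWindow.reverse :=
    (occursAt_reflect _).2 (by rwa [add_sub_cancel_right])
  have hreflect := h.reflect (k + k)
  have := hreflect.occursAt_isolatedWindow_reverse_add_five
    (hreflect.occursAt_isolatedWindow_add_three hmirror)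
  rw [occursAt_reflect] at this
  rwa [show k + k - (k + 3 + 5) = k - 8 by ring] at this

lemma occursAt_isolatedWindow_add_mul (h : BelowGapRight α) (hw : OccursAt α k isolatedWindow)
    (j : ℤ) : OccursAt α (k + 8 * j) isolatedWindow := by
  induction j using Int.induction_on with
  | zero => simpa using hw
  | succ j ih =>
    have := h.occursAt_isolatedWindow_add_eight ih
    rwa [add_assoc, ← mul_add_one] at this
  | pred j ih =>
    have := h.occursAt_isolatedWindow_sub_eight ih
    rwa [add_sub_assoc, ← mul_sub_one] at this

lemma eq_periodicSeq (h : BelowGapRight α) (hw : OccursAt α k isolatedWindow) (n : ℤ) :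
    α (k + n) = periodicSeq n := by
  obtain ⟨r, hr⟩ := Int.eq_ofNat_of_zero_le (Int.emod_nonneg n (by norm_num : (8 : ℤ) ≠ 0))
  have hr_lt : r < 8 := by omega
  have hcenter := ((h.occursAt_isolatedWindow_add_mul hw (n / 8)).shift (n := r)
    (by simp only [isolatedWindow, List.length_cons, List.length_nil]; omega)).1
  rw [add_assoc, ← hr, Int.mul_ediv_add_emod] at hcenter
  rw [hcenter, periodicSeq, hr]
  interval_cases r <;> decide

lemma exists_occursAt_isolatedWindow (h : BelowGapRight α) (hk : gapLeft < lambdaVal α k) :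
    ∃ j, OccursAt α j isolatedWindow := by
  obtain ⟨w, hw, hwk⟩ := h.exists_mem_candidates (gapLower_lt_gapLeft.trans hk)
  simp only [candidates, List.mem_cons, List.not_mem_nil, or_false] at hw
  rcases hw with rfl | rfl | rfl | rfl | rfl
  · exact (h.not_occursAt_leftWindow hk hwk).elim
  · exact ⟨k, hwk⟩
  · exact (h.not_occursAt_rightWindow hwk).elim
  · exact ⟨k + 3, h.occursAt_isolatedWindow_add_three hwk⟩
  · exact (h.not_occursAt_rightWindow_reverse hwk).elim

end BelowGapRight

lemma lambdaVal_translate {α : ℤ → ℕ} (m k : ℤ) :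
    lambdaVal (fun n => α (m + n)) k = lambdaVal α (m + k) := by
  simp only [lambdaVal, add_assoc, add_sub_assoc]

lemma markovValue_translate {α : ℤ → ℕ} (m : ℤ) :
    markovValue (fun n => α (m + n)) = markovValue α := by
  simp only [markovValue, lambdaVal_translate]
  exact (Equiv.addLeft m).iSup_comp (g := lambdaVal α)

lemma digitsLE_two_of_lambdaVal_lt {α : ℤ → ℕ} (hα : ∀ n, 0 < α n)
    (h : ∀ k, lambdaVal α k < 7 / 2) : DigitsLE 2 α := by
  have hle_three : DigitsLE 3 α := fun k => by
    have hlt : (α k : ℝ) < 4 := by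
      have := h k
      rw [lambdaVal_eq hα] at this
      linarith [cfFrac_pos (s := leftDigits α k) fun _ => hα _,
        cfFrac_pos (s := rightDigits α k) fun _ => hα _]
    exact ⟨hα k, Nat.lt_succ_iff.1 (by exact_mod_cast hlt)⟩
  have quarter_le {s : Stream' ℕ} (hs : DigitsLE 3 s) : 1 / 4 ≤ cfFrac s := by
    have := inv_le_cfFrac hs (cfFrac_le_one fun n => (hs (n + 1)).1)
    norm_num at this ⊢
    exact this
  refine fun k => ⟨hα k, Nat.lt_succ_iff.1 ?_⟩
  have hlt := h k
  rw [lambdaVal_eq hα] at hlt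
  have : (α k : ℝ) < 3 := by
    linarith [quarter_le (hle_three.leftDigits (k := k)),
      quarter_le (hle_three.rightDigits (k := k))]
  exact_mod_cast this

lemma exists_eq_periodicSeq_of_mem_gap {α : ℤ → ℕ} (hα : ∀ n, 0 < α n)
    (hbdd : BddAbove (range (lambdaVal α))) (hgap : markovValue α ∈ Ioo gapLeft gapRight) :
    ∃ m, (fun n => α (m + n)) = periodicSeq := by
  have hlt (k : ℤ) : lambdaVal α k < gapRight := (le_ciSup hbdd k).trans_lt hgap.2
  have hlt' (k : ℤ) : lambdaVal α k < 7 / 2 := by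
    have hupper := gapRight_lt_gapUpper
    rw [gapUpper] at hupper
    push_cast at hupper
    linarith [hlt k]
  have h : BelowGapRight α := ⟨digitsLE_two_of_lambdaVal_lt hα hlt', hlt⟩
  obtain ⟨k, hk⟩ := exists_lt_of_lt_ciSup hgap.1
  obtain ⟨m, hm⟩ := h.exists_occursAt_isolatedWindow hk
  exact ⟨m, funext (h.eq_periodicSeq hm)⟩

/-! ### Attained values -/

lemma lambdaVal_lt_gapLower {α : ℤ → ℕ} (hα : DigitsLE 2 α) {k : ℤ}
    (hk : α k = 2 → α (k - 1) = 2 ∨ α (k + 1) = 2) : lambdaVal α k < gapLower := by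
  have of_occursAt {w : Window} (hw : OccursAt α k w) (hupper : w.upper < gapLower) :
      lambdaVal α k < gapLower :=
    (hw.lambdaVal_mem_Icc hα).2.trans_lt (Rat.cast_lt.2 hupper)
  obtain ⟨hpos, hle⟩ := hα k
  obtain hone | htwo : α k = 1 ∨ α k = 2 := by omega
  · exact of_occursAt (w := ⟨[], 1, []⟩) ⟨hone, hasPrefix_nil _, hasPrefix_nil _⟩
      (by decide +kernel)
  · rcases hk htwo with hleft | hright
    · exact of_occursAt (w := ⟨[2], 2, []⟩)
        ⟨htwo, hasPrefix_cons.2 ⟨by simpa [leftDigits, Stream'.head, Stream'.get] using hleft,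
          hasPrefix_nil _⟩, hasPrefix_nil _⟩ (by decide +kernel)
    · exact of_occursAt (w := ⟨[], 2, [2]⟩)
        ⟨htwo, hasPrefix_nil _, hasPrefix_cons.2
          ⟨by simpa [rightDigits, Stream'.head, Stream'.get] using hright, hasPrefix_nil _⟩⟩
        (by decide +kernel)

lemma isGreatest_lambdaVal {α : ℤ → ℕ} (hα : DigitsLE 2 α) {x : ℝ} (hx : gapLower ≤ x)
    (hzero : lambdaVal α 0 = x)
    (hmax : ∀ k, α k = 2 → α (k - 1) = 1 → α (k + 1) = 1 → lambdaVal α k = x) :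
    IsGreatest (range (lambdaVal α)) x := by
  refine ⟨⟨0, hzero⟩, forall_mem_range.2 fun k => ?_⟩
  by_cases hk : α k = 2 → α (k - 1) = 2 ∨ α (k + 1) = 2
  · exact (lambdaVal_lt_gapLower hα hk).le.trans hx
  · push Not at hk
    obtain ⟨htwo, hleft, hright⟩ := hk
    have hleft' := hα (k - 1)
    have hright' := hα (k + 1)
    exact (hmax k htwo (by omega) (by omega)).le

lemma markovValue_eq_of_isGreatest {α : ℤ → ℕ} {x : ℝ}
    (h : IsGreatest (range (lambdaVal α)) x) : markovValue α = x :=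
  h.csSup_eq

lemma mem_markovSpectrum_of_isGreatest {α : ℤ → ℕ} {x : ℝ} (hα : ∀ n, 0 < α n)
    (h : IsGreatest (range (lambdaVal α)) x) : x ∈ markovSpectrum :=
  ⟨α, hα, ⟨x, h.2⟩, markovValue_eq_of_isGreatest h⟩

lemma periodic_lambdaVal {α : ℤ → ℕ} {p : ℤ} (h : Function.Periodic α p) :
    Function.Periodic (lambdaVal α) p := fun k => by
  rw [add_comm, ← lambdaVal_translate]
  simp only [add_comm p, h _]

lemma drop_rightDigits_of_periodic {α : ℤ → ℕ} {p : ℕ} (h : Function.Periodic α p) (k : ℤ) :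
    (rightDigits α k).drop p = rightDigits α k := by
  rw [drop_rightDigits]
  funext n
  simp only [rightDigits]
  rw [← h (k + 1 + n)]
  congr 1
  ring

lemma drop_leftDigits_of_periodic {α : ℤ → ℕ} {p : ℕ} (h : Function.Periodic α p) (k : ℤ) :
    (leftDigits α k).drop p = leftDigits α k := by
  rw [drop_leftDigits]
  funext n
  simp only [leftDigits]
  rw [← h (k - p - 1 - n)]
  congr 1
  ring

lemma digitsLE_two_ite (p : ℤ → Prop) [DecidablePred p] :
    DigitsLE 2 fun n => if p n then 2 else 1 := fun n => by
  dsimp only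
  split_ifs <;> simp

/-- The sequence of period `2111`, with a period starting at `0`. -/
def leftSeq (n : ℤ) : ℕ := if n % 4 = 0 then 2 else 1

lemma digitsLE_leftSeq : DigitsLE 2 leftSeq := digitsLE_two_ite _

lemma periodic_leftSeq : Function.Periodic leftSeq 4 := fun n => by
  simp [leftSeq]

lemma lambdaVal_leftSeq_zero : lambdaVal leftSeq 0 = gapLeft := by
  have hpos (n : ℤ) : 0 < leftSeq n := (digitsLE_leftSeq n).1
  have hright : cfFrac (rightDigits leftSeq 0) = leftTail :=
    HasPrefix.cfFrac_eq_of_drop_eq (w := [1, 1, 1, 2]) rfl (fun _ => hpos _)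
      (drop_rightDigits_of_periodic periodic_leftSeq 0) (by decide) leftTail_nonneg
      cfWord_leftTail
  have hleft : cfFrac (leftDigits leftSeq 0) = leftTail :=
    HasPrefix.cfFrac_eq_of_drop_eq (w := [1, 1, 1, 2]) rfl (fun _ => hpos _)
      (drop_leftDigits_of_periodic periodic_leftSeq 0) (by decide) leftTail_nonneg
      cfWord_leftTail
  rw [lambdaVal_eq hpos, hright, hleft, gapLeft_eq]
  simp only [leftSeq, EuclideanDomain.zero_mod, if_true]
  push_cast
  ring

lemma isGreatest_lambdaVal_leftSeq : IsGreatest (range (lambdaVal leftSeq)) gapLeft := by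
  refine isGreatest_lambdaVal digitsLE_leftSeq gapLower_lt_gapLeft.le lambdaVal_leftSeq_zero
    fun k hk _ _ => ?_
  have hmod : k % 4 = 0 := by
    rw [leftSeq] at hk
    split_ifs at hk <;> omega
  obtain ⟨j, rfl⟩ : ∃ j : ℤ, k = j • 4 := ⟨k / 4, by rw [smul_eq_mul]; omega⟩
  rw [(periodic_lambdaVal periodic_leftSeq).zsmul_eq, lambdaVal_leftSeq_zero]

lemma digitsLE_periodicSeq : DigitsLE 2 periodicSeq := digitsLE_two_ite _

lemma periodic_periodicSeq : Function.Periodic periodicSeq 8 := fun n => by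
  simp [periodicSeq]

lemma reflect_periodicSeq : reflect periodicSeq 5 = periodicSeq := by
  funext n
  simp only [reflect, periodicSeq]
  congr 1
  apply propext
  omega

lemma le_sqrt_689 : 26 ≤ √689 := Real.le_sqrt_of_sq_le (by norm_num)

lemma cfFrac_rightDigits_periodicSeq :
    cfFrac (rightDigits periodicSeq 0) = (√689 - 15) / 16 := by
  set x := (√689 - 15) / 16 with hx_def
  have hx : 0 ≤ x := by linarith [le_sqrt_689]
  have hroot : 16 * x ^ 2 + 30 * x = 29 := by
    rw [hx_def]
    linear_combination 1 / 16 * Real.sq_sqrt (show (0 : ℝ) ≤ 689 by norm_num)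
  have hmoebius : cfWord [1, 2, 2, 1, 2, 1, 1, 2] x = (45 * x + 116) / (64 * x + 165) := by
    simp only [cfWord, List.foldr_cons, List.foldr_nil]
    push_cast
    field_simp
    ring
  refine HasPrefix.cfFrac_eq_of_drop_eq (w := [1, 2, 2, 1, 2, 1, 1, 2]) rfl
    (fun _ => (digitsLE_periodicSeq _).1) (drop_rightDigits_of_periodic periodic_periodicSeq 0)
    (by decide) hx ?_
  rw [hmoebius, div_eq_iff (by positivity)]
  linear_combination -4 * hroot

lemma cfFrac_leftDigits_periodicSeq :
    cfFrac (leftDigits periodicSeq 0) = (√689 - 17) / 16 := by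
  set x := (√689 - 17) / 16 with hx_def
  have hx : 0 ≤ x := by linarith [le_sqrt_689]
  have hroot : 16 * x ^ 2 + 34 * x = 25 := by
    rw [hx_def]
    linear_combination 1 / 16 * Real.sq_sqrt (show (0 : ℝ) ≤ 689 by norm_num)
  have hmoebius : cfWord [1, 1, 2, 1, 2, 2, 1, 2] x = (37 * x + 100) / (64 * x + 173) := by
    simp only [cfWord, List.foldr_cons, List.foldr_nil]
    push_cast
    field_simp
    ring
  refine HasPrefix.cfFrac_eq_of_drop_eq (w := [1, 1, 2, 1, 2, 2, 1, 2]) rfl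
    (fun _ => (digitsLE_periodicSeq _).1) (drop_leftDigits_of_periodic periodic_periodicSeq 0)
    (by decide) hx ?_
  rw [hmoebius, div_eq_iff (by positivity)]
  linear_combination -4 * hroot

lemma sqrt_689_div_eight_mem_gap : √689 / 8 ∈ Ioo gapLeft gapRight := by
  have h6 : √6 < 2.4495 := (Real.sqrt_lt' (by norm_num)).2 (by norm_num)
  have h30 : (5.477 : ℝ) < √30 := Real.lt_sqrt_of_sq_lt (by norm_num)
  have h689 : (26.248 : ℝ) < √689 := Real.lt_sqrt_of_sq_lt (by norm_num)
  have h689' : √689 < 26.249 := (Real.sqrt_lt' (by norm_num)).2 (by norm_num)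
  rw [gapLeft, gapRight]
  constructor <;> linarith

lemma lambdaVal_periodicSeq_zero : lambdaVal periodicSeq 0 = √689 / 8 := by
  rw [lambdaVal_eq fun n => (digitsLE_periodicSeq n).1, cfFrac_leftDigits_periodicSeq,
    cfFrac_rightDigits_periodicSeq, show periodicSeq 0 = 2 from rfl]
  push_cast
  ring

lemma isGreatest_lambdaVal_periodicSeq :
    IsGreatest (range (lambdaVal periodicSeq)) (√689 / 8) := by
  refine isGreatest_lambdaVal digitsLE_periodicSeq
    (gapLower_lt_gapLeft.trans sqrt_689_div_eight_mem_gap.1).le lambdaVal_periodicSeq_zero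
    fun k hk hleft hright => ?_
  have hfive : lambdaVal periodicSeq 5 = lambdaVal periodicSeq 0 := by
    conv_lhs => rw [← reflect_periodicSeq]
    rw [lambdaVal_reflect fun n => (digitsLE_periodicSeq n).1, sub_self]
  have hmod : k % 8 = 0 ∨ k % 8 = 5 := by
    simp only [periodicSeq] at hk hleft hright
    split_ifs at hk hleft hright <;> omega
  obtain ⟨j, rfl | rfl⟩ : ∃ j : ℤ, k = j • 8 ∨ k = 5 + j • 8 :=
    ⟨k / 8, by rw [smul_eq_mul]; omega⟩
  · rw [(periodic_lambdaVal periodic_periodicSeq).zsmul_eq, lambdaVal_periodicSeq_zero]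
  · rw [(periodic_lambdaVal periodic_periodicSeq).zsmul, hfive, lambdaVal_periodicSeq_zero]

/-- The sequence `…222 1221 2112 1221 222…`, with the block `2112` at the positions `-3, …, 0` and
period `2221` beyond the blocks `1221`. Its symmetry about `-3/2` exchanges `n` and `-3 - n`. -/
def rightSeq (n : ℤ) : ℕ :=
  if max n (-3 - n) = -1 ∨ max n (-3 - n) = 1 ∨ (4 ≤ max n (-3 - n) ∧ max n (-3 - n) % 4 = 0)
  then 1 else 2

lemma digitsLE_rightSeq : DigitsLE 2 rightSeq := fun n => by
  rw [rightSeq]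
  split_ifs <;> simp

lemma reflect_rightSeq : reflect rightSeq (-3) = rightSeq := by
  funext n
  simp only [reflect, rightSeq, sub_sub_cancel, max_comm]

lemma cfFrac_rightDigits_rightSeq : cfFrac (rightDigits rightSeq 0) = rightBranch := by
  have hpos (n : ℤ) : 0 < rightSeq n := (digitsLE_rightSeq n).1
  have hper : (rightDigits rightSeq 4).drop 4 = rightDigits rightSeq 4 := by
    rw [drop_rightDigits]
    funext n
    simp only [rightDigits, rightSeq]
    congr 1
    apply propext
    omega
  have htail : cfFrac (rightDigits rightSeq 4) = rightTail :=
    HasPrefix.cfFrac_eq_of_drop_eq (w := [2, 2, 2, 1]) rfl (fun _ => hpos _) hper (by decide)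
      rightTail_nonneg cfWord_rightTail
  rw [rightBranch, ← htail]
  exact HasPrefix.cfFrac_rightDigits (w := [1, 2, 2, 1]) rfl hpos

lemma lambdaVal_rightSeq_zero : lambdaVal rightSeq 0 = gapRight := by
  have hpos (n : ℤ) : 0 < rightSeq n := (digitsLE_rightSeq n).1
  have hmirror : leftDigits rightSeq (-3) = rightDigits rightSeq 0 := by
    conv_rhs => rw [← reflect_rightSeq, rightDigits_reflect, sub_zero]
  have hleft : cfFrac (leftDigits rightSeq 0) = cfWord [1, 1, 2] rightBranch := by
    rw [← cfFrac_rightDigits_rightSeq, ← hmirror]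
    exact HasPrefix.cfFrac_leftDigits (w := [1, 1, 2]) rfl hpos
  rw [lambdaVal_eq hpos, hleft, cfFrac_rightDigits_rightSeq, gapRight_eq,
    show rightSeq 0 = 2 from rfl, Nat.cast_ofNat]

lemma isGreatest_lambdaVal_rightSeq : IsGreatest (range (lambdaVal rightSeq)) gapRight := by
  refine isGreatest_lambdaVal digitsLE_rightSeq (gapLower_lt_gapLeft.trans
    (sqrt_689_div_eight_mem_gap.1.trans sqrt_689_div_eight_mem_gap.2)).le lambdaVal_rightSeq_zero
    fun k hk hleft hright => ?_
  obtain rfl | rfl : k = 0 ∨ k = -3 := by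
    simp only [rightSeq] at hk hleft hright
    split_ifs at hk hleft hright <;> omega
  · exact lambdaVal_rightSeq_zero
  · rw [← reflect_rightSeq, lambdaVal_reflect fun n => (digitsLE_rightSeq n).1, sub_self,
      lambdaVal_rightSeq_zero]

/-- The intersection of the Markov spectrum with the open interval consists of
exactly one (hence isolated) point, and both endpoints belong to the Markov
spectrum. -/
theorem markov_gap_9 :
    markovSpectrum ∩ Ioo (4 * Real.sqrt 6 / 3) ((18879 + 800 * Real.sqrt 30) / 7089) = {(Real.sqrt 689 / 8 : ℝ)} ∧
    (4 * Real.sqrt 6 / 3) ∈ markovSpectrum ∧ ((18879 + 800 * Real.sqrt 30) / 7089) ∈ markovSpectrum := by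
  refine ⟨Subset.antisymm ?_ (singleton_subset_iff.2 ⟨?_, sqrt_689_div_eight_mem_gap⟩),
    mem_markovSpectrum_of_isGreatest (fun n => (digitsLE_leftSeq n).1)
      isGreatest_lambdaVal_leftSeq,
    mem_markovSpectrum_of_isGreatest (fun n => (digitsLE_rightSeq n).1)
      isGreatest_lambdaVal_rightSeq⟩
  · rintro _ ⟨⟨α, hα, hbdd, rfl⟩, hgap⟩
    obtain ⟨m, hm⟩ := exists_eq_periodicSeq_of_mem_gap hα hbdd hgap
    rw [mem_singleton_iff, ← markovValue_translate m, hm]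
    exact markovValue_eq_of_isGreatest isGreatest_lambdaVal_periodicSeq
  · exact mem_markovSpectrum_of_isGreatest (fun n => (digitsLE_periodicSeq n).1)
      isGreatest_lambdaVal_periodicSeq
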